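/- Let α = [0; a₁, a₂, …] ∈ (0,1) be irrational with convergents pₙ/qₙ and θₙ = qₙα − pₙ, and let β ∈ 𝕋 have representation β = Σ_{k=0}^∞ d_k θ_k with digits satisfying 0 ≤ d₀ < a₁, 0 ≤ d_k ≤ a_{k+1}, and d_k = a_{k+1} ⇒ d_{k−1} = 0 for k ≥ 1. If the support supp(β) = {k : d_k ≠ 0} has natural density 0, then β ∈ t^s_{(qₙ)}(𝕋), i.e., qₙβ → 0 statistically in 𝕋. -/

import Mathlib

open Filter Topology

noncomputable section

/-- The circle group `𝕋 = ℝ/ℤ`. -/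
abbrev Circle1 : Type := AddCircle (1 : ℝ)

/-- A set of naturals has natural density zero. -/
def DensityZero (A : Set ℕ) : Prop :=
  Tendsto (fun n : ℕ => ((A ∩ Set.Icc 1 n).ncard : ℝ) / n) atTop (𝓝 0)

/-- Statistical convergence to `0` of a sequence in the circle. -/
def StatTendstoZero (x : ℕ → Circle1) : Prop :=
  ∀ ε : ℝ, 0 < ε → DensityZero {n : ℕ | ε ≤ ‖x n‖}

/-- The characterized subgroup `t_(a_n)(𝕋)`. -/
def charSet (a : ℕ → ℤ) : Set Circle1 :=
  {x : Circle1 | Tendsto (fun n : ℕ => a n • x) atTop (𝓝 0)}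

/-- The statistically characterized subgroup `t^s_(a_n)(𝕋)`. -/
def statCharSet (a : ℕ → ℤ) : Set Circle1 :=
  {x : Circle1 | StatTendstoZero (fun n : ℕ => a n • x)}

namespace CF

/-- Gauss-map orbit of `α`: `G α 0 = α`, `G α (n+1) = {1 / G α n}`. -/
def G (α : ℝ) : ℕ → ℝ
  | 0 => α
  | n + 1 => Int.fract (G α n)⁻¹

/-- The partial quotients of the regular continued fraction `α = [0; a 1, a 2, …]`
(with the convention `a 0 = 0`). -/
def a (α : ℝ) : ℕ → ℕ
  | 0 => 0
  | n + 1 => ⌊(G α n)⁻¹⌋₊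

/-- Denominators of the convergents of the continued fraction of `α`. -/
def q (α : ℝ) : ℕ → ℕ
  | 0 => 1
  | 1 => a α 1
  | (n + 2) => a α (n + 2) * q α (n + 1) + q α n

/-- Numerators of the convergents of the continued fraction of `α`. -/
def p (α : ℝ) : ℕ → ℕ
  | 0 => 0
  | 1 => 1
  | (n + 2) => a α (n + 2) * p α (n + 1) + p α n

/-- `θ n = q n * α - p n`. -/
def θ (α : ℝ) (n : ℕ) : ℝ := (q α n : ℝ) * α - (p α n : ℝ)

end CF

open CF

/-! ### Sets of natural density zero -/

/-- The points within distance `m` of a set of density zero form a set of density zero. -/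
lemma DensityZero.of_forall_exists_near {A B : Set ℕ} (hA : DensityZero A) (m : ℕ)
    (hB : ∀ n ∈ B, ∃ k ∈ A, n ≤ k + m ∧ k ≤ n + m) : DensityZero B := by
  have hcount : ∀ N : ℕ, (B ∩ Set.Icc 1 N).ncard ≤
      (2 * m + 1) * ((A ∩ Set.Icc 1 N).ncard + (m + 1)) := by
    intro N
    classical
    have hfin : (A ∩ Set.Icc 1 N).Finite := (Set.finite_Icc 1 N).inter_of_right A
    let C : Finset ℕ := hfin.toFinset ∪ insert 0 (Finset.Ioc N (N + m))
    have hC : C.card ≤ (A ∩ Set.Icc 1 N).ncard + (m + 1) := by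
      refine (Finset.card_union_le _ _).trans (Nat.add_le_add ?_ ?_)
      · rw [Set.ncard_eq_toFinset_card _ hfin]
      · refine (Finset.card_insert_le _ _).trans ?_
        simp
    have hsub : B ∩ Set.Icc 1 N ⊆
        ((C.biUnion fun k => Finset.Icc (k - m) (k + m) : Finset ℕ) : Set ℕ) := by
      rintro n ⟨hnB, hn⟩
      obtain ⟨k, hkA, h1, h2⟩ := hB n hnB
      simp only [Set.mem_Icc] at hn
      simp only [Finset.coe_biUnion, Set.mem_iUnion, Finset.mem_coe, Finset.mem_Icc]
      refine ⟨k, ?_, by omega⟩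
      simp only [C, Finset.mem_union, Set.Finite.mem_toFinset, Finset.mem_insert,
        Finset.mem_Ioc, Set.mem_inter_iff, Set.mem_Icc, hkA, true_and]
      omega
    calc (B ∩ Set.Icc 1 N).ncard
        ≤ (C.biUnion fun k => Finset.Icc (k - m) (k + m)).card := by
          rw [← Set.ncard_coe_finset]
          exact Set.ncard_le_ncard hsub (Finset.finite_toSet _)
      _ ≤ C.card * (2 * m + 1) := by
          refine Finset.card_biUnion_le_card_mul _ _ _ fun k _ => ?_
          simp only [Nat.card_Icc]
          omega
      _ ≤ _ := by rw [mul_comm]; exact Nat.mul_le_mul_left _ hC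
  have hlim : Tendsto (fun N : ℕ => ((2 * m + 1 : ℕ) : ℝ) *
      (((A ∩ Set.Icc 1 N).ncard : ℝ) / N + ((m + 1 : ℕ) : ℝ) / N)) atTop (𝓝 0) := by
    have := (hA.add (tendsto_const_div_atTop_nhds_zero_nat ((m + 1 : ℕ) : ℝ))).const_mul
      ((2 * m + 1 : ℕ) : ℝ)
    simpa using this
  refine squeeze_zero (fun N => by positivity) (fun N => ?_) hlim
  rw [← add_div, ← mul_div_assoc]
  gcongr
  exact_mod_cast hcount N

namespace CF

variable {α : ℝ}

/-! ### The Gauss orbit, the denominators and the approximation errors -/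

lemma G_mem_Ioo_and_irrational (hα : α ∈ Set.Ioo (0 : ℝ) 1) (hirr : Irrational α) (n : ℕ) :
    G α n ∈ Set.Ioo (0 : ℝ) 1 ∧ Irrational (G α n) := by
  induction n with
  | zero => exact ⟨hα, hirr⟩
  | succ n ih =>
    have hI : Irrational (G α (n + 1)) := by
      have : G α (n + 1) = (G α n)⁻¹ - (⌊(G α n)⁻¹⌋ : ℤ) := rfl
      rw [this]
      exact ih.2.inv.sub_intCast _
    refine ⟨⟨lt_of_le_of_ne (Int.fract_nonneg _) ?_, Int.fract_lt_one _⟩, hI⟩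
    exact (hI.ne_zero).symm

lemma G_pos (hα : α ∈ Set.Ioo (0 : ℝ) 1) (hirr : Irrational α) (n : ℕ) : 0 < G α n :=
  (G_mem_Ioo_and_irrational hα hirr n).1.1

lemma G_lt_one (hα : α ∈ Set.Ioo (0 : ℝ) 1) (hirr : Irrational α) (n : ℕ) : G α n < 1 :=
  (G_mem_Ioo_and_irrational hα hirr n).1.2

lemma a_add_G_mul (hα : α ∈ Set.Ioo (0 : ℝ) 1) (hirr : Irrational α) (n : ℕ) :
    ((a α (n + 1) : ℝ) + G α (n + 1)) * G α n = 1 := by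
  have h0 := G_pos hα hirr n
  have h1 : (a α (n + 1) : ℝ) = (⌊(G α n)⁻¹⌋ : ℤ) :=
    natCast_floor_eq_intCast_floor (inv_pos.2 h0).le
  have h2 : G α (n + 1) = Int.fract (G α n)⁻¹ := rfl
  rw [h1, h2, Int.floor_add_fract, inv_mul_cancel₀ h0.ne']

lemma one_le_a (hα : α ∈ Set.Ioo (0 : ℝ) 1) (hirr : Irrational α) (n : ℕ) :
    1 ≤ a α (n + 1) := by
  refine Nat.le_floor ?_
  rw [Nat.cast_one]
  exact (one_le_inv₀ (G_pos hα hirr n)).2 (G_lt_one hα hirr n).le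

lemma q_add_two (α : ℝ) (n : ℕ) : q α (n + 2) = a α (n + 2) * q α (n + 1) + q α n := rfl

lemma q_le_succ (hα : α ∈ Set.Ioo (0 : ℝ) 1) (hirr : Irrational α) (n : ℕ) :
    q α n ≤ q α (n + 1) := by
  cases n with
  | zero => exact one_le_a hα hirr 0
  | succ n =>
    rw [q_add_two]
    have : 1 * q α (n + 1) ≤ a α (n + 2) * q α (n + 1) :=
      Nat.mul_le_mul_right _ (one_le_a hα hirr (n + 1))
    omega

lemma two_mul_q_le (hα : α ∈ Set.Ioo (0 : ℝ) 1) (hirr : Irrational α) (n : ℕ) :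
    2 * q α n ≤ q α (n + 2) := by
  rw [q_add_two]
  have h1 : 1 * q α (n + 1) ≤ a α (n + 2) * q α (n + 1) :=
    Nat.mul_le_mul_right _ (one_le_a hα hirr (n + 1))
  have h2 := q_le_succ hα hirr n
  omega

lemma two_pow_mul_q_le (hα : α ∈ Set.Ioo (0 : ℝ) 1) (hirr : Irrational α) (n j : ℕ) :
    2 ^ j * q α n ≤ q α (n + 2 * j) := by
  induction j with
  | zero => simp
  | succ j ih =>
    have := two_mul_q_le hα hirr (n + 2 * j)
    rw [pow_succ, show n + 2 * (j + 1) = n + 2 * j + 2 by ring]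
    linarith

lemma θ_add_two (α : ℝ) (n : ℕ) : θ α (n + 2) = a α (n + 2) * θ α (n + 1) + θ α n := by
  simp only [θ, q, p]
  push_cast
  ring

lemma θ_succ (hα : α ∈ Set.Ioo (0 : ℝ) 1) (hirr : Irrational α) (n : ℕ) :
    θ α (n + 1) = -(G α (n + 1) * θ α n) := by
  induction n with
  | zero =>
    have h := a_add_G_mul hα hirr 0
    have h0 : G α 0 = α := rfl
    rw [h0] at h
    simp only [θ, q, p, zero_add, Nat.cast_one, Nat.cast_zero] at h ⊢
    linarith
  | succ n ih =>
    rw [θ_add_two]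
    have h := a_add_G_mul hα hirr (n + 1)
    rw [ih]
    linear_combination (-θ α n) * h

lemma abs_θ_succ (hα : α ∈ Set.Ioo (0 : ℝ) 1) (hirr : Irrational α) (n : ℕ) :
    |θ α (n + 1)| = G α (n + 1) * |θ α n| := by
  rw [θ_succ hα hirr, abs_neg, abs_mul, abs_of_pos (G_pos hα hirr _)]

lemma abs_θ_succ_le (hα : α ∈ Set.Ioo (0 : ℝ) 1) (hirr : Irrational α) (n : ℕ) :
    |θ α (n + 1)| ≤ |θ α n| := by
  rw [abs_θ_succ hα hirr]
  exact mul_le_of_le_one_left (abs_nonneg _) (G_lt_one hα hirr _).le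

lemma a_mul_abs_θ (hα : α ∈ Set.Ioo (0 : ℝ) 1) (hirr : Irrational α) (n : ℕ) :
    a α (n + 2) * |θ α (n + 1)| = |θ α n| - |θ α (n + 2)| := by
  rw [abs_θ_succ hα hirr (n + 1), abs_θ_succ hα hirr n]
  linear_combination |θ α n| * a_add_G_mul hα hirr (n + 1)

lemma q_mul_abs_θ_add (hα : α ∈ Set.Ioo (0 : ℝ) 1) (hirr : Irrational α) (n : ℕ) :
    q α (n + 1) * |θ α n| + q α n * |θ α (n + 1)| = 1 := by
  induction n with
  | zero =>
    have h := a_add_G_mul hα hirr 0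
    have h0 : G α 0 = α := rfl
    have h1 : |θ α 0| = α := by simp [θ, q, p, abs_of_pos hα.1]
    rw [abs_θ_succ hα hirr 0, h1]
    rw [h0] at h
    simp only [q, zero_add, Nat.cast_one] at h ⊢
    linarith
  | succ n ih =>
    have h := a_mul_abs_θ hα hirr n
    rw [q_add_two]
    push_cast
    linear_combination ih + (q α (n + 1) : ℝ) * h

lemma q_mul_abs_θ_le_one (hα : α ∈ Set.Ioo (0 : ℝ) 1) (hirr : Irrational α) (n : ℕ) :
    q α n * |θ α n| ≤ 1 := by
  have h1 : (q α n : ℝ) ≤ q α (n + 1) := by exact_mod_cast q_le_succ hα hirr n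
  have h2 := mul_le_mul_of_nonneg_right h1 (abs_nonneg (θ α n))
  have h3 : 0 ≤ (q α n : ℝ) * |θ α (n + 1)| := by positivity
  linarith [q_mul_abs_θ_add hα hirr n]

lemma q_mul_abs_θ_le (hα : α ∈ Set.Ioo (0 : ℝ) 1) (hirr : Irrational α) (n j : ℕ) :
    q α n * |θ α (n + 2 * j)| ≤ (1 / 2) ^ j := by
  have h1 : (2 : ℝ) ^ j * q α n ≤ q α (n + 2 * j) := by
    exact_mod_cast two_pow_mul_q_le hα hirr n j
  have h2 := mul_le_mul_of_nonneg_right h1 (abs_nonneg (θ α (n + 2 * j)))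
  rw [one_div, inv_pow, ← one_div, le_div_iff₀ (by positivity)]
  linarith [q_mul_abs_θ_le_one hα hirr (n + 2 * j)]

/-! ### Digit sums -/

lemma sum_range_digit_mul_q_le (hα : α ∈ Set.Ioo (0 : ℝ) 1) (hirr : Irrational α) {d : ℕ → ℕ}
    (hd : ∀ k, d k ≤ a α (k + 1)) (N : ℕ) :
    ∑ k ∈ Finset.range N, d k * q α k ≤ 2 * q α N := by
  have key : ∀ N, ∑ k ∈ Finset.range (N + 1), d k * q α k ≤ q α (N + 1) + q α N := by
    intro N
    induction N with
    | zero =>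
      have : d 0 ≤ a α 1 := hd 0
      simp only [zero_add, Finset.sum_range_one, q]
      omega
    | succ N ih =>
      rw [Finset.sum_range_succ, q_add_two]
      have := Nat.mul_le_mul_right (q α (N + 1)) (hd (N + 1))
      linarith
  cases N with
  | zero => simp
  | succ N =>
    have h1 := key N
    have h2 := q_le_succ hα hirr N
    omega

lemma sum_range_digit_mul_abs_θ_le (hα : α ∈ Set.Ioo (0 : ℝ) 1) (hirr : Irrational α)
    {d : ℕ → ℕ} (hd : ∀ k, d k ≤ a α (k + 1)) (N K : ℕ) :
    ∑ k ∈ Finset.range K, (d (k + (N + 1)) : ℝ) * |θ α (k + (N + 1))| ≤ 2 * |θ α N| := by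
  have key : ∑ k ∈ Finset.range K, (d (k + (N + 1)) : ℝ) * |θ α (k + (N + 1))| ≤
      |θ α N| + |θ α (N + 1)| - |θ α (K + N)| - |θ α (K + N + 1)| := by
    induction K with
    | zero => simp
    | succ K ih =>
      rw [Finset.sum_range_succ]
      have h1 : (d (K + (N + 1)) : ℝ) ≤ a α (K + N + 2) := by exact_mod_cast hd _
      have h2 := mul_le_mul_of_nonneg_right h1 (abs_nonneg (θ α (K + (N + 1))))
      have h3 := a_mul_abs_θ hα hirr (K + N)
      rw [show K + 1 + N = K + N + 1 by ring]
      rw [← add_assoc K N 1] at *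
      linarith
  linarith [abs_θ_succ_le hα hirr N, abs_nonneg (θ α (K + N)), abs_nonneg (θ α (K + N + 1))]

lemma summable_digit_mul_abs_θ (hα : α ∈ Set.Ioo (0 : ℝ) 1) (hirr : Irrational α)
    {d : ℕ → ℕ} (hd : ∀ k, d k ≤ a α (k + 1)) :
    Summable fun k => (d k : ℝ) * |θ α k| :=
  (summable_nat_add_iff 1).1 <| summable_of_sum_range_le (fun _ => by positivity)
    (sum_range_digit_mul_abs_θ_le hα hirr hd 0)

lemma abs_tsum_digit_mul_θ_le (hα : α ∈ Set.Ioo (0 : ℝ) 1) (hirr : Irrational α)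
    {d : ℕ → ℕ} (hd : ∀ k, d k ≤ a α (k + 1)) (N : ℕ) :
    |∑' k, (d (k + (N + 1)) : ℝ) * θ α (k + (N + 1))| ≤ 2 * |θ α N| := by
  have habs : ∀ k, ‖(d (k + (N + 1)) : ℝ) * θ α (k + (N + 1))‖ =
      (d (k + (N + 1)) : ℝ) * |θ α (k + (N + 1))| := fun k => by
    rw [Real.norm_eq_abs, abs_mul, Nat.abs_cast]
  have hs := (summable_nat_add_iff (N + 1)).2 (summable_digit_mul_abs_θ hα hirr hd)
  rw [← Real.norm_eq_abs]
  refine (norm_tsum_le_tsum_norm (by simpa only [habs] using hs)).trans ?_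
  simp only [habs]
  exact Real.tsum_le_of_sum_range_le (fun _ => by positivity)
    (sum_range_digit_mul_abs_θ_le hα hirr hd N)

/-- Modulo integers, `qₙ` times a finite digit sum is `θₙ` times the corresponding sum of
denominators. -/
lemma exists_int_q_mul_sum_eq (α : ℝ) (d : ℕ → ℕ) (n M : ℕ) :
    ∃ z : ℤ, (q α n : ℝ) * ∑ k ∈ Finset.range M, (d k : ℝ) * θ α k =
      θ α n * ((∑ k ∈ Finset.range M, d k * q α k : ℕ) : ℝ) + z := by
  refine ⟨∑ k ∈ Finset.range M, (d k : ℤ) * (q α k * p α n - q α n * p α k), ?_⟩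
  push_cast
  rw [Finset.mul_sum, Finset.mul_sum, ← Finset.sum_add_distrib]
  refine Finset.sum_congr rfl fun k _ => ?_
  simp only [θ]
  ring

/-- If all digits within distance `2 * j` of `n` vanish, then `qₙ β` is exponentially close to
an integer. -/
lemma norm_q_smul_le (hα : α ∈ Set.Ioo (0 : ℝ) 1) (hirr : Irrational α) {d : ℕ → ℕ}
    (hd : ∀ k, d k ≤ a α (k + 1)) {n j : ℕ}
    (hzero : ∀ k, n ≤ k + 2 * j → k ≤ n + 2 * j → d k = 0) :
    ‖(q α n : ℤ) • ((∑' k, (d k : ℝ) * θ α k : ℝ) : Circle1)‖ ≤ 4 * (1 / 2) ^ j := by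
  have hs : Summable fun k => (d k : ℝ) * θ α k := by
    refine Summable.of_norm ?_
    simpa only [Real.norm_eq_abs, abs_mul, Nat.abs_cast] using summable_digit_mul_abs_θ hα hirr hd
  set S := ∑ k ∈ Finset.range (n + 2 * j + 1), d k * q α k with hS
  set t := ∑' k, (d (k + (n + 2 * j + 1)) : ℝ) * θ α (k + (n + 2 * j + 1)) with ht
  obtain ⟨z, hz⟩ := exists_int_q_mul_sum_eq α d n (n + 2 * j + 1)
  have hsplit : (q α n : ℝ) * ∑' k, (d k : ℝ) * θ α k = θ α n * S + q α n * t + z := by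
    rw [← hs.sum_add_tsum_nat_add (n + 2 * j + 1), mul_add, hz]
    ring
  have hcoe : (q α n : ℤ) • ((∑' k, (d k : ℝ) * θ α k : ℝ) : Circle1) =
      ((θ α n * S + q α n * t : ℝ) : Circle1) := by
    rw [← AddCircle.coe_zsmul, zsmul_eq_mul, Int.cast_natCast, hsplit, AddCircle.coe_add]
    have : ((z : ℝ) : Circle1) = 0 := (AddCircle.coe_eq_zero_iff 1).2 ⟨z, by simp⟩
    rw [this, add_zero]
  have hhead : |θ α n| * S ≤ 2 * (1 / 2) ^ j := by
    have hSeq : S = ∑ k ∈ Finset.range (n - 2 * j), d k * q α k := by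
      refine (Finset.sum_subset (Finset.range_mono (by omega)) fun k hk hk' => ?_).symm
      simp only [Finset.mem_range] at hk hk'
      rw [hzero k (by omega) (by omega), zero_mul]
    rcases le_or_gt (2 * j) n with h | h
    · obtain ⟨m, rfl⟩ := Nat.exists_eq_add_of_le' h
      rw [Nat.add_sub_cancel] at hSeq
      have h1 : (S : ℝ) ≤ 2 * q α m := by
        rw [hSeq]
        exact_mod_cast sum_range_digit_mul_q_le hα hirr hd m
      have h2 := mul_le_mul_of_nonneg_left h1 (abs_nonneg (θ α (m + 2 * j)))
      linarith [q_mul_abs_θ_le hα hirr m j]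
    · rw [hSeq, Nat.sub_eq_zero_of_le h.le]
      simp only [Finset.range_zero, Finset.sum_empty, Nat.cast_zero, mul_zero]
      positivity
  have htail : (q α n : ℝ) * |t| ≤ 2 * (1 / 2) ^ j := by
    have h1 := mul_le_mul_of_nonneg_left (abs_tsum_digit_mul_θ_le hα hirr hd (n + 2 * j))
      (Nat.cast_nonneg (α := ℝ) (q α n))
    linarith [q_mul_abs_θ_le hα hirr n j]
  rw [hcoe]
  have hnorm : ‖((θ α n * S + q α n * t : ℝ) : Circle1)‖ ≤ |θ α n * S + q α n * t| :=
    QuotientAddGroup.norm_mk_le_norm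
  refine hnorm.trans ((abs_add_le _ _).trans ?_)
  rw [abs_mul, abs_mul, Nat.abs_cast, Nat.abs_cast]
  linarith

end CF

/-- **Proposition 2.6.** If `supp(β)` has natural density zero then `β ∈ t^s_(qₙ)(𝕋)`. -/
theorem stmt_7 (α : ℝ) (hα : α ∈ Set.Ioo (0 : ℝ) 1) (hirr : Irrational α)
    (d : ℕ → ℕ) (hd0 : d 0 < a α 1) (hdk : ∀ k, 1 ≤ k → d k ≤ a α (k + 1))
    (hcarry : ∀ k, 1 ≤ k → d k = a α (k + 1) → d (k - 1) = 0)
    (β : ℝ) (hβ : β = ∑' k : ℕ, (d k : ℝ) * θ α k)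
    (hsupp : DensityZero {k : ℕ | d k ≠ 0}) :
    (↑β : Circle1) ∈ statCharSet (fun n => (q α n : ℤ)) := by
  have hd : ∀ k, d k ≤ a α (k + 1) := fun k => by
    rcases Nat.eq_zero_or_pos k with rfl | hk
    · exact hd0.le
    · exact hdk k hk
  intro ε hε
  obtain ⟨j, hj⟩ := exists_pow_lt_of_lt_one (div_pos hε (by norm_num : (0 : ℝ) < 4))
    (by norm_num : (1 / 2 : ℝ) < 1)
  refine hsupp.of_forall_exists_near (2 * j) fun n hn => ?_
  by_contra! hfar
  have hzero : ∀ k, n ≤ k + 2 * j → k ≤ n + 2 * j → d k = 0 := fun k h1 h2 => by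
    by_contra hk
    exact absurd (hfar k hk h1) (not_lt.2 h2)
  have hle := norm_q_smul_le hα hirr hd hzero
  rw [← hβ] at hle
  have hn' : ε ≤ ‖(q α n : ℤ) • (β : Circle1)‖ := hn
  linarith
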